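/- Let x be a solution of the heavy ball equation with vanishing damping and source term g satisfying ∫₀^∞ (1+t)^α ‖g(t)‖ dt < ∞. Then ∫₀^∞ (1+t)^α (Φ(x(t)) − Φ*) dt < ∞. -/

import Mathlib

open MeasureTheory Filter Real Set RealInnerProductSpace

/-- Tail of an integrable function. -/
lemma hb_tail (m : ℝ → ℝ) (T1 : ℝ) (hm : IntegrableOn m (Ici T1)) :
    ∃ T ≥ T1, ∀ S ≥ T, ∫ t in T..S, m t ≤ 1 / 2 := by
  have h1 := intervalIntegral_tendsto_integral_Ioi T1
    (hm.mono_set Ioi_subset_Ici_self) tendsto_id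
  have h2 := (Metric.tendsto_atTop.1 h1) (1 / 4) (by norm_num)
  obtain ⟨N, hN⟩ := h2
  refine ⟨max N T1, le_max_right _ _, fun S hS => ?_⟩
  have a1 := hN (max N T1) (le_max_left _ _)
  have a2 := hN S ((le_max_left _ _).trans hS)
  have ii : ∀ a b, T1 ≤ a → T1 ≤ b → IntervalIntegrable m volume a b := by
    intro a b ha hb
    apply IntegrableOn.intervalIntegrable
    exact hm.mono_set (fun t ht => (le_inf ha hb).trans ht.1)
  have h3 := intervalIntegral.integral_add_adjacent_intervals
    (ii T1 (max N T1) le_rfl (le_max_right _ _))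
    (ii (max N T1) S (le_max_right _ _) ((le_max_right _ _).trans hS))
  simp only [id, Real.dist_eq] at a1 a2
  rw [abs_lt] at a1 a2
  linarith [a1.1, a1.2, a2.1, a2.2]

/-- Gronwall-type lemma. -/
lemma hb_gronwall (F F' m q : ℝ → ℝ) (T1 : ℝ)
    (hF : ∀ t ≥ T1, HasDerivAt F (F' t) t) (hF0 : ∀ t ≥ T1, 0 ≤ F t)
    (hm0 : ∀ t ≥ T1, 0 ≤ m t) (hm : IntegrableOn m (Ici T1))
    (hq : ContinuousOn q (Ici T1)) (hq0 : ∀ t ≥ T1, 0 ≤ q t)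
    (hle : ∀ t ≥ T1, F' t ≤ m t * (1 + F t) - q t) :
    IntegrableOn q (Ici T1) := by
  obtain ⟨T, hT, htail⟩ := hb_tail m T1 hm
  have hFc : ContinuousOn F (Ici T1) := fun t ht => (hF t ht).continuousAt.continuousWithinAt
  have sub : ∀ S, Icc T S ⊆ Ici T1 := fun S t ht => hT.trans ht.1
  have hmI : ∀ S, IntegrableOn m (Icc T S) := fun S => hm.mono_set (sub S)
  have hmF : ∀ S, IntegrableOn (fun t => m t * (1 + F t)) (Icc T S) := fun S =>
    (hmI S).mul_continuousOn ((continuousOn_const.add hFc).mono (sub S)) isCompact_Icc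
  have hqI : ∀ S, IntegrableOn q (Icc T S) := fun S =>
    (hq.mono (sub S)).integrableOn_Icc
  have toII : ∀ (f : ℝ → ℝ) S, T ≤ S → IntegrableOn f (Icc T S) →
      IntervalIntegrable f volume T S := fun f S hS h =>
    (intervalIntegrable_iff_integrableOn_Icc_of_le hS).2 h
  have key : ∀ S ≥ T, F S - F T ≤ (∫ t in T..S, m t * (1 + F t)) - ∫ t in T..S, q t := by
    intro S hS
    have := intervalIntegral.sub_le_integral_of_hasDeriv_right_of_le (g := F) (g' := F')
      (φ := fun t => m t * (1 + F t) - q t) hS (hFc.mono (sub S))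
      (fun t ht => (hF t (hT.trans ht.1.le)).hasDerivWithinAt)
      ((hmF S).sub (hqI S)) (fun t ht => hle t (hT.trans ht.1.le))
    rwa [intervalIntegral.integral_sub (toII _ S hS (hmF S)) (toII _ S hS (hqI S))] at this
  have qnn : ∀ S ≥ T, 0 ≤ ∫ t in T..S, q t := fun S hS =>
    intervalIntegral.integral_nonneg hS (fun t ht => hq0 t (hT.trans ht.1))
  have bd : ∀ S ≥ T, ∀ M, (∀ t ∈ Icc T S, F t ≤ M) →
      ∫ t in T..S, m t * (1 + F t) ≤ (1 + M) / 2 := by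
    intro S hS M hM
    have hM0 : 0 ≤ M := (hF0 T hT).trans (hM T ⟨le_rfl, hS⟩)
    have : ∫ t in T..S, m t * (1 + F t) ≤ ∫ t in T..S, m t * (1 + M) := by
      apply intervalIntegral.integral_mono_on hS (toII _ S hS (hmF S))
        ((toII _ S hS (hmI S)).mul_const _)
      intro t ht
      have := hm0 t (hT.trans ht.1)
      have := hM t ht
      gcongr
    rw [intervalIntegral.integral_mul_const] at this
    have h2 := htail S hS
    nlinarith
  have Fbd : ∀ S ≥ T, F S ≤ 1 + 2 * F T := by
    intro S hS
    obtain ⟨s, hs, hmax⟩ := isCompact_Icc.exists_isMaxOn (nonempty_Icc.2 hS) (hFc.mono (sub S))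
    have h1 := bd s hs.1 (F s) (fun t ht => hmax ⟨ht.1, ht.2.trans hs.2⟩)
    have h2 := key s hs.1
    have h3 := qnn s hs.1
    have h4 : F S ≤ F s := hmax ⟨hS, le_rfl⟩
    linarith
  have qbd : ∀ S ≥ T, ∫ t in T..S, q t ≤ 1 + 2 * F T := by
    intro S hS
    have h1 := bd S hS (1 + 2 * F T) (fun t ht => Fbd t ht.1)
    have h2 := key S hS
    have h3 := hF0 S (hT.trans hS)
    linarith
  have h1 : IntegrableOn q (Ioi T) := by
    refine integrableOn_Ioi_of_intervalIntegral_norm_bounded (1 + 2 * F T) T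
      (fun i : ℝ => (hqI i).mono_set Ioc_subset_Icc_self) tendsto_id ?_
    filter_upwards [eventually_ge_atTop T] with S hS
    refine le_trans (le_of_eq ?_) (qbd S hS)
    apply intervalIntegral.integral_congr
    intro t ht
    rw [uIcc_of_le hS] at ht
    exact Real.norm_of_nonneg (hq0 t (hT.trans ht.1))
  have h2 : IntegrableOn q (Icc T1 T) :=
    (hq.mono (fun t ht => ht.1)).integrableOn_Icc
  rw [← Icc_union_Ioi_eq_Ici hT]
  exact h2.union h1

lemma hb_alg_lower (c w w1 n d W P : ℝ) (hc : 0 < c) (hw : 0 < w) (hw1 : w1 ≤ c / 16)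
    (hW : 0 ≤ W) (hP : |P| ≤ d * n) :
    1 / c * (w * n) ^ 2 + c / 8 * d ^ 2 ≤
      4 / c * (w ^ 2 * (n ^ 2 / 2 + W)) + w * P + (c - w1) * (d ^ 2 / 2) := by
  have h1 : -(d * n) ≤ P := (abs_le.1 hP).1
  have h2 : 0 ≤ 4 / c * (w ^ 2 * W) := by positivity
  have h3 : w * -(d * n) ≤ w * P := by gcongr
  have h4 : 0 ≤ 1 / c * (w * n - c / 2 * d) ^ 2 := by positivity
  have h5 : 1 / c * (w * n - c / 2 * d) ^ 2 = 1 / c * (w * n) ^ 2 - w * n * d + c / 4 * d ^ 2 := by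
    field_simp; ring
  have h6 : 0 ≤ (c / 16 - w1) * (d ^ 2 / 2) := mul_nonneg (by linarith) (by positivity)
  have h7 : 4 / c * (w ^ 2 * (n ^ 2 / 2 + W)) = 2 * (1 / c * (w * n) ^ 2) + 4 / c * (w ^ 2 * W) := by
    ring
  have h8 : 0 ≤ c * d ^ 2 := by positivity
  nlinarith

lemma hb_alg_upper (c w w1 w2 n d W G A B R F : ℝ) (hc : 0 < c) (hw : 0 < w)
    (hw1 : w1 ≤ c / 16) (hw2 : w2 ≤ 0) (hn : 0 ≤ n) (hd : 0 ≤ d) (hG : 0 ≤ G)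
    (hW : 0 ≤ W) (hA : A ≤ n * G) (hB : B ≤ d * G) (hR : W ≤ R)
    (hF : 1 / c * (w * n) ^ 2 + c / 8 * d ^ 2 ≤ F) :
    4 / c * (2 * w * w1 * (n ^ 2 / 2 + W) + w ^ 2 * (A - c / w * n ^ 2)) + w * n ^ 2 + w * B
      - w * R - w2 * (d ^ 2 / 2) ≤
    ((4 / c * (1 + c) + (1 + 8 / c)) * (w * G) + 4 / c * (- w2)) * (1 + F) - 1 / 2 * (w * W) := by
  have a1 : 0 ≤ 1 / c * (w * n) ^ 2 := by positivity
  have a2 : 0 ≤ c / 8 * d ^ 2 := by positivity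
  have hF0 : 0 ≤ F := by linarith
  have b1 : (w * n) ^ 2 ≤ c * F := by
    have : c * (1 / c * (w * n) ^ 2) ≤ c * F := by gcongr; linarith
    rwa [← mul_assoc, mul_one_div_cancel hc.ne', one_mul] at this
  have b2 : d ^ 2 ≤ 8 / c * F := by
    have : 8 / c * (c / 8 * d ^ 2) ≤ 8 / c * F := by gcongr; linarith
    have e : 8 / c * (c / 8 * d ^ 2) = d ^ 2 := by field_simp
    linarith
  have c1 : w * n ≤ (1 + c) * (1 + F) := by nlinarith [sq_nonneg (w * n - 1), mul_pos hw hc]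
  have c2 : d ≤ (1 + 8 / c) * (1 + F) := by
    have : 0 < 8 / c := by positivity
    nlinarith [sq_nonneg (d - 1)]
  have c3 : -w2 * (d ^ 2 / 2) ≤ -w2 * (4 / c * (1 + F)) := by
    have : d ^ 2 / 2 ≤ 4 / c * (1 + F) := by
      have e : 4 / c * (1 + F) = (8 / c * F) / 2 + 4 / c := by ring
      have : 0 < 4 / c := by positivity
      linarith
    have : 0 ≤ -w2 := by linarith
    gcongr
  have d1 : 4 / c * (2 * w * w1 * (n ^ 2 / 2 + W)) ≤ 1 / 2 * (w * (n ^ 2 / 2 + W)) := by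
    have : 4 / c * (2 * w * (c / 16) * (n ^ 2 / 2 + W)) = 1 / 2 * (w * (n ^ 2 / 2 + W)) := by
      field_simp; ring
    rw [← this]
    gcongr
  have d2 : 4 / c * (w ^ 2 * (A - c / w * n ^ 2)) = 4 / c * (w ^ 2 * A) - 4 * (w * n ^ 2) := by
    field_simp
  have d3 : 4 / c * (w ^ 2 * A) ≤ 4 / c * (w ^ 2 * (n * G)) := by gcongr
  have d4 : 4 / c * (w ^ 2 * (n * G)) ≤ 4 / c * ((1 + c) * (1 + F)) * (w * G) := by
    have : 4 / c * (w ^ 2 * (n * G)) = 4 / c * (w * n) * (w * G) := by ring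
    rw [this]; gcongr
  have d5 : w * B ≤ w * (d * G) := by gcongr
  have d6 : w * (d * G) ≤ ((1 + 8 / c) * (1 + F)) * (w * G) := by
    have : w * (d * G) = d * (w * G) := by ring
    rw [this]; gcongr
  have d7 : w * W ≤ w * R := by gcongr
  have d8 : 0 ≤ w * n ^ 2 := by positivity
  have e1 : 4 / c * (2 * w * w1 * (n ^ 2 / 2 + W) + w ^ 2 * (A - c / w * n ^ 2)) =
    4 / c * (2 * w * w1 * (n ^ 2 / 2 + W)) + 4 / c * (w ^ 2 * (A - c / w * n ^ 2)) := by ring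
  rw [e1, d2]
  have e2 : ((4 / c * (1 + c) + (1 + 8 / c)) * (w * G) + 4 / c * (- w2)) * (1 + F) =
    4 / c * ((1 + c) * (1 + F)) * (w * G) + ((1 + 8 / c) * (1 + F)) * (w * G)
      + -w2 * (4 / c * (1 + F)) := by ring
  rw [e2]
  linarith

lemma hb_convex {H : Type*} [NormedAddCommGroup H] [InnerProductSpace ℝ H] [CompleteSpace H]
    (Φ : H → ℝ) (Φ' : H → H) (hΦconv : ConvexOn ℝ Set.univ Φ)
    (hΦdiff : ∀ u : H, HasGradientAt Φ (Φ' u) u) (u p : H) :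
    Φ u - Φ p ≤ ⟪u - p, Φ' u⟫ := by
  have h1 : ConvexOn ℝ Set.univ (fun s : ℝ => Φ (AffineMap.lineMap u p s)) := by
    exact hΦconv.comp_affineMap (AffineMap.lineMap (k := ℝ) u p)
  have h2 : HasDerivAt (fun s : ℝ => Φ (AffineMap.lineMap u p s)) ⟪Φ' u, p - u⟫ 0 := by
    have hl : HasDerivAt (fun s : ℝ => AffineMap.lineMap u p s) (p - u) (0:ℝ) :=
      AffineMap.hasDerivAt_lineMap
    have hg := (hΦdiff (AffineMap.lineMap u p (0:ℝ))).hasFDerivAt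
    have := hg.comp_hasDerivAt (0:ℝ) hl
    simpa [Function.comp_def] using this
  have h3 := h1.le_slope_of_hasDerivAt (mem_univ 0) (mem_univ 1) one_pos h2
  simp [slope_def_field] at h3
  have h4 : ⟪u - p, Φ' u⟫ = - ⟪Φ' u, p - u⟫ := by
    rw [real_inner_comm, ← neg_sub p u, inner_neg_right]
  linarith

theorem heavy_ball_potential_integrable
    {H : Type*} [NormedAddCommGroup H] [InnerProductSpace ℝ H] [CompleteSpace H]
    (c α : ℝ) (hc : 0 < c) (hα0 : 0 ≤ α) (hα1 : α < 1)
    (Φ : H → ℝ) (Φ' : H → H) (Φstar : ℝ)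
    (hΦconv : ConvexOn ℝ Set.univ Φ)
    (hΦdiff : ∀ u : H, HasGradientAt Φ (Φ' u) u)
    (hΦcont : Continuous Φ')
    (hargmin : {v : H | ∀ u, Φ v ≤ Φ u}.Nonempty)
    (hΦstar : ∀ v ∈ {v : H | ∀ u, Φ v ≤ Φ u}, Φ v = Φstar)
    (g : ℝ → H) (hg : IntegrableOn g (Ici (0:ℝ)))
    (x x' x'' : ℝ → H)
    (hx1 : ∀ t ∈ Ici (0:ℝ), HasDerivAt x (x' t) t)
    (hx2 : ∀ t ∈ Ici (0:ℝ), HasDerivAt x' (x'' t) t)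
    (hode : ∀ t ∈ Ici (0:ℝ),
      x'' t + (c / (1 + t) ^ α) • x' t + Φ' (x t) = g t)
    (hgα : IntegrableOn (fun t => (1 + t) ^ α * ‖g t‖) (Ici (0:ℝ))) :
    IntegrableOn (fun t => (1 + t) ^ α * (Φ (x t) - Φstar)) (Ici (0:ℝ)) := by
  obtain ⟨p, hp⟩ := hargmin
  have hpS : Φ p = Φstar := hΦstar p hp
  have hW : ∀ t, 0 ≤ Φ (x t) - Φstar := fun t => by have := hp (x t); linarith
  set w : ℝ → ℝ := fun t => (1 + t) ^ α with hwdef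
  set w1 : ℝ → ℝ := fun t => α * (1 + t) ^ (α - 1) with hw1def
  set w2 : ℝ → ℝ := fun t => α * ((α - 1) * (1 + t) ^ (α - 2)) with hw2def
  have hwpos : ∀ t ≥ (0:ℝ), 0 < w t := fun t ht => Real.rpow_pos_of_pos (by linarith) _
  have hw2np : ∀ t ≥ (0:ℝ), w2 t ≤ 0 := fun t ht => by
    have : 0 < (1 + t) ^ (α - 2) := Real.rpow_pos_of_pos (by linarith) _
    simp only [hw2def]
    apply mul_nonpos_of_nonneg_of_nonpos hα0
    apply mul_nonpos_of_nonpos_of_nonneg (by linarith) this.le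
  have hdw : ∀ t ≥ (0:ℝ), HasDerivAt w (w1 t) t := fun t ht => by
    have := ((hasDerivAt_id t).const_add 1).rpow_const (p := α) (Or.inl (by simp; linarith))
    simpa [hwdef, hw1def] using this
  have hdw1 : ∀ t ≥ (0:ℝ), HasDerivAt w1 (w2 t) t := fun t ht => by
    have := (((hasDerivAt_id t).const_add 1).rpow_const (p := α - 1)
      (Or.inl (by simp; linarith))).const_mul α
    have e : α - 1 - 1 = α - 2 := by ring
    simpa [hw1def, hw2def, e] using this
  have hw2I : IntegrableOn w2 (Ici (0:ℝ)) := by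
    rw [integrableOn_Ici_iff_integrableOn_Ioi]
    have := integrableOn_add_rpow_Ioi_of_lt (a := α - 2) (c := 0) (m := 1) (by linarith) (by norm_num)
    have := (this.const_mul (α - 1)).const_mul α
    simpa [IntegrableOn, hw2def, add_comm] using this
  obtain ⟨T0, hT0⟩ : ∃ T, ∀ t ≥ T, w1 t ≤ c / 16 := by
    have h1 := (tendsto_rpow_neg_atTop (y := 1 - α) (by linarith)).comp
      (tendsto_atTop_add_const_left atTop (1:ℝ) tendsto_id)
    have h2 := h1.const_mul α
    rw [mul_zero] at h2
    have h3 := h2.eventually (eventually_le_nhds (show (0:ℝ) < c / 16 by positivity))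
    obtain ⟨T, hT⟩ := eventually_atTop.1 h3
    refine ⟨T, fun t ht => ?_⟩
    simpa [hw1def] using hT t ht
  set T1 := max T0 0 with hT1
  have hT10 : ∀ t ≥ T1, 0 ≤ t := fun t ht => (le_max_right _ _).trans ht
  have hT1w : ∀ t ≥ T1, w1 t ≤ c / 16 := fun t ht => hT0 t ((le_max_left _ _).trans ht)
  have hxc : ContinuousOn x (Ici 0) := fun t ht => (hx1 t ht).continuousAt.continuousWithinAt
  have hΦc : Continuous Φ := continuous_iff_continuousAt.2 fun u =>
    (hΦdiff u).hasFDerivAt.continuousAt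
  have hwc : ContinuousOn w (Ici 0) := fun t ht => (hdw t ht).continuousAt.continuousWithinAt
  have hqc : ContinuousOn (fun t => w t * (Φ (x t) - Φstar)) (Ici 0) :=
    hwc.mul ((hΦc.comp_continuousOn hxc).sub continuousOn_const)
  have hsub : Ici T1 ⊆ Ici (0:ℝ) := Ici_subset_Ici.2 (le_max_right _ _)
  set F : ℝ → ℝ := fun t => 4 / c * (w t ^ 2 * (‖x' t‖ ^ 2 / 2 + (Φ (x t) - Φstar)))
    + w t * ⟪x t - p, x' t⟫ + (c - w1 t) * (‖x t - p‖ ^ 2 / 2) with hFdef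
  set F' : ℝ → ℝ := fun t =>
    4 / c * (2 * w t * w1 t * (‖x' t‖ ^ 2 / 2 + (Φ (x t) - Φstar))
      + w t ^ 2 * (⟪x' t, g t⟫ - c / w t * ‖x' t‖ ^ 2)) + w t * ‖x' t‖ ^ 2
      + w t * ⟪x t - p, g t⟫
      - w t * ⟪x t - p, Φ' (x t)⟫ - w2 t * (‖x t - p‖ ^ 2 / 2) with hF'def
  have hlow : ∀ t ≥ T1, 1 / c * (w t * ‖x' t‖) ^ 2 + c / 8 * ‖x t - p‖ ^ 2 ≤ F t := fun t ht =>
    hb_alg_lower c (w t) (w1 t) _ _ _ _ hc (hwpos t (hT10 t ht)) (hT1w t ht) (hW t)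
      (abs_real_inner_le_norm _ _)
  have hFd : ∀ t ≥ T1, HasDerivAt F (F' t) t := by
    intro t ht
    have ht0 := hT10 t ht
    have hxp : HasDerivAt (fun t => x t - p) (x' t) t := (hx1 t ht0).sub_const p
    have e1 : HasDerivAt (fun t => Φ (x t)) ⟪Φ' (x t), x' t⟫ t := by
      have := (hΦdiff (x t)).hasFDerivAt.comp_hasDerivAt t (hx1 t ht0)
      simpa [Function.comp_def] using this
    have e2 := (hx2 t ht0).norm_sq
    have e3 := hxp.norm_sq
    have e4 := hxp.inner ℝ (hx2 t ht0)
    have D := (((((hdw t ht0).pow 2).mul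
      ((e2.div_const 2).add (e1.sub_const Φstar))).const_mul (4 / c)).add
      ((hdw t ht0).mul e4)).add (((hdw1 t ht0).const_sub c).mul (e3.div_const 2))
    refine D.congr_deriv ?_
    have hx'' : x'' t = g t - (c / w t) • x' t - Φ' (x t) := by
      rw [← hode t ht0]; simp only [hwdef]; abel
    have hwt := (hwpos t ht0).ne'
    have i1 : ⟪x' t, x'' t⟫ = ⟪x' t, g t⟫ - c / w t * ‖x' t‖ ^ 2 - ⟪Φ' (x t), x' t⟫ := by
      rw [hx'', inner_sub_right, inner_sub_right, inner_smul_right, real_inner_self_eq_norm_sq,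
        real_inner_comm (x' t) (Φ' (x t))]
    have i2 : w t * ⟪x t - p, x'' t⟫ = w t * ⟪x t - p, g t⟫ - c * ⟪x t - p, x' t⟫
        - w t * ⟪x t - p, Φ' (x t)⟫ := by
      rw [hx'', inner_sub_right, inner_sub_right, inner_smul_right]
      field_simp
    have i3 : ⟪x' t, x' t⟫ = ‖x' t‖ ^ 2 := real_inner_self_eq_norm_sq _
    simp only [hF'def, Pi.pow_apply, Pi.add_apply]
    rw [i1, i3]
    simp
    linear_combination i2
  set m : ℝ → ℝ := fun t =>
    (4 / c * (1 + c) + (1 + 8 / c)) * (w t * ‖g t‖) + 4 / c * (- w2 t) with hmdef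
  have hq := hb_gronwall F F' m (fun t => 1 / 2 * (w t * (Φ (x t) - Φstar))) T1 hFd
    (fun t ht => le_trans (by positivity) (hlow t ht))
    (fun t ht => by
      have := hwpos t (hT10 t ht)
      have : 0 ≤ - w2 t := by linarith [hw2np t (hT10 t ht)]
      positivity)
    (IntegrableOn.mono_set ((hgα.const_mul _).add (hw2I.neg.const_mul _)) hsub)
    ((continuousOn_const.mul hqc).mono hsub)
    (fun t ht => mul_nonneg (by norm_num) (mul_nonneg (hwpos t (hT10 t ht)).le (hW t)))
    (fun t ht => hb_alg_upper c (w t) (w1 t) (w2 t) _ _ _ _ _ _ _ _ hc (hwpos t (hT10 t ht))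
      (hT1w t ht) (hw2np t (hT10 t ht)) (norm_nonneg _) (norm_nonneg _) (norm_nonneg _) (hW t)
      (real_inner_le_norm _ _) (real_inner_le_norm _ _)
      (by rw [← hpS]; exact hb_convex Φ Φ' hΦconv hΦdiff (x t) p) (hlow t ht))
  have hq2 : IntegrableOn (fun t => w t * (Φ (x t) - Φstar)) (Ici T1) := by
    have := hq.const_mul 2
    refine this.congr (ae_of_all _ fun t => ?_)
    simp only; ring
  rw [← Icc_union_Ici_eq_Ici (le_max_right T0 0)]
  exact ((hqc.mono (fun t ht => ht.1)).integrableOn_Icc).union hq2
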